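/- arXiv:1709.09598 — 6 statements merged into one kernel-verified Lean document; each statement's English description precedes it below -/
import Mathlib

section
/- Let G, H be groups and g ∈ G ≀ H such that σ(g) has infinite order; let h ∈ H and m ∈ ℕ. Set F = supp(g) ∩ {σ(g)^{−i}h : i ∈ [0, m−1]}. Then F is linearly ordered by ≼_{σ(g)} (any two elements of F are comparable), and τ(g^m)(h) equals the product of the elements τ(g)(h') for h' ∈ F, taken in increasing order with respect to ≼_{σ(g)}. -/
namespace WreathPaper

open Function

variable (G H : Type*) [Group G] [Group H]

/-- The automorphism of `H → G` (pointwise multiplication) given by translation by `h`. -/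
def wreathAut (h : H) : MulAut (H → G) where
  toFun f := fun a => f (h⁻¹ * a)
  invFun f := fun a => f (h * a)
  left_inv f := by funext a; simp
  right_inv f := by funext a; simp
  map_mul' f g := rfl

/-- The action of `H` on `H → G` by translation, as a homomorphism into `MulAut`. -/
def wreathphi : H →* MulAut (H → G) where
  toFun := wreathAut G H
  map_one' := by
    apply MulEquiv.toMonoidHom_injective
    ext f a
    simp [wreathAut]
  map_mul' h₁ h₂ := by
    apply MulEquiv.toMonoidHom_injective
    ext f a
    simp [wreathAut, mul_assoc]

lemma finite_mulSupport_shift {f : H → G} (hf : (mulSupport f).Finite) (h : H) :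
    (mulSupport fun a => f (h * a)).Finite := by
  have : (fun a : H => f (h * a)) = f ∘ (fun a => h * a) := rfl
  rw [this, Function.mulSupport_comp_eq_preimage]
  exact hf.preimage (fun x _ y _ hxy => by simpa using hxy)

/-- The restricted wreath product `G ≀ H`, as the subgroup of the (unrestricted)
semidirect product `(H → G) ⋊ H` consisting of pairs whose first component has
finite support. -/
def RW : Subgroup ((H → G) ⋊[wreathphi G H] H) where
  carrier := {x | (mulSupport x.left).Finite}
  one_mem' := by
    simp only [Set.mem_setOf_eq, SemidirectProduct.one_left]
    simp
  mul_mem' := by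
    intro a b ha hb
    simp only [Set.mem_setOf_eq, SemidirectProduct.mul_left] at *
    refine Set.Finite.subset (Set.Finite.union ha
      (finite_mulSupport_shift G H hb a.right⁻¹)) ?_
    exact Function.mulSupport_mul _ _
  inv_mem' := by
    intro a ha
    simp only [Set.mem_setOf_eq, SemidirectProduct.inv_left] at *
    have : (wreathphi G H a.right⁻¹ a.left⁻¹ : H → G)
        = fun x => (a.left (a.right * x))⁻¹ := by
      funext x
      simp [wreathphi, wreathAut]
    rw [this]
    have h2 : (mulSupport fun x => (a.left (a.right * x))⁻¹)
        = mulSupport fun x => a.left (a.right * x) := by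
      simp [Function.mulSupport_inv]
    rw [h2]
    exact finite_mulSupport_shift G H ha a.right

/-- The projection `σ : G ≀ H → H`. -/
def σw (x : RW G H) : H := (x : (H → G) ⋊[wreathphi G H] H).right

/-- The projection `τ : G ≀ H → G^(H)`. -/
def τw (x : RW G H) : H → G := (x : (H → G) ⋊[wreathphi G H] H).left

/-- The canonical embedding of `G` into `G ≀ H`: `g ↦ (f_g, 1)`. -/
def embG [DecidableEq H] (g : G) : RW G H :=
  ⟨⟨Pi.mulSingle (1 : H) g, 1⟩, by
    exact Set.Finite.subset (Set.finite_singleton (1 : H))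
      Pi.mulSupport_mulSingle_subset⟩

/-- The canonical embedding of `H` into `G ≀ H`: `h ↦ (𝟙, h)`. -/
def embH (h : H) : RW G H :=
  ⟨⟨1, h⟩, by simp [RW]⟩

end WreathPaper

/-!
Unfolding the multiplication of the semidirect product, `τ(g ^ m)(h)` is the product of the values
of `τ(g)` at `h, σ(g)⁻¹ h, …, σ(g)⁻⁽ᵐ⁻¹⁾ h`, in this order, which is increasing for `≼_{σ(g)}`.
Discarding the points outside `supp(g)` removes only factors `1`, and since `σ(g)` has infinite
order the remaining points are distinct, so they enumerate `F`.
-/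

namespace WreathPaper

section Orbit

/-- The relation `a ≼_c b` of the paper: `a` is obtained from `b` by multiplying on the left by a
natural power of `c`. -/
def PowLE {M : Type*} [Monoid M] (c a b : M) : Prop := ∃ n : ℕ, a = c ^ n * b

/-- The points `h, c⁻¹ h, …, c⁻⁽ᵐ⁻¹⁾ h`, listed in `≼_c`-increasing order. It is a list rather than
a set because it indexes a noncommutative product. -/
def backwardOrbit {H : Type*} [Group H] (c h : H) (m : ℕ) : List H :=
  (List.range m).map fun i ↦ c⁻¹ ^ i * h

variable {H : Type*} [Group H]

theorem powLE_inv_pow_mul (c h : H) {i j : ℕ} (hij : i ≤ j) :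
    PowLE c (c⁻¹ ^ i * h) (c⁻¹ ^ j * h) := by
  obtain ⟨k, rfl⟩ := Nat.exists_eq_add_of_le' hij
  exact ⟨k, by rw [pow_add, mul_assoc, inv_pow c k, mul_inv_cancel_left]⟩

theorem powLE_total_inv_pow_mul (c h : H) (i j : ℕ) :
    PowLE c (c⁻¹ ^ i * h) (c⁻¹ ^ j * h) ∨ PowLE c (c⁻¹ ^ j * h) (c⁻¹ ^ i * h) :=
  (le_total i j).imp (powLE_inv_pow_mul c h) (powLE_inv_pow_mul c h)

theorem mem_backwardOrbit {c h y : H} {m : ℕ} :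
    y ∈ backwardOrbit c h m ↔ ∃ i < m, y = c⁻¹ ^ i * h := by
  simp only [backwardOrbit, List.mem_map, List.mem_range, eq_comm]

theorem backwardOrbit_succ (c h : H) (m : ℕ) :
    backwardOrbit c h (m + 1) = h :: backwardOrbit c (c⁻¹ * h) m := by
  simp only [backwardOrbit, List.range_succ_eq_map, List.map_cons, List.map_map,
    Function.comp_def, Nat.succ_eq_add_one, pow_zero, one_mul, pow_succ, mul_assoc]

theorem pairwise_powLE_backwardOrbit (c h : H) (m : ℕ) :
    (backwardOrbit c h m).Pairwise (PowLE c) :=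
  List.pairwise_le_range.map _ fun _ _ ↦ powLE_inv_pow_mul c h

theorem nodup_backwardOrbit {c : H} (hc : ¬IsOfFinOrder c) (h : H) (m : ℕ) :
    (backwardOrbit c h m).Nodup := by
  have hpow : Function.Injective fun i : ℕ ↦ c⁻¹ ^ i :=
    injective_pow_iff_not_isOfFinOrder.2 (mt isOfFinOrder_inv_iff.1 hc)
  exact List.nodup_range.map ((mul_left_injective h).comp hpow)

end Orbit

section UnrestrictedWreathProduct

variable {G H : Type*} [Group G] [Group H]

theorem left_mul_apply (x y : (H → G) ⋊[wreathphi G H] H) (h : H) :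
    (x * y).left h = x.left h * y.left (x.right⁻¹ * h) :=
  rfl

theorem left_pow_apply (x : (H → G) ⋊[wreathphi G H] H) (m : ℕ) (h : H) :
    (x ^ m).left h = ((backwardOrbit x.right h m).map x.left).prod := by
  induction m generalizing h with
  | zero => rfl
  | succ m ih =>
    rw [pow_succ', left_mul_apply, ih, backwardOrbit_succ, List.map_cons, List.prod_cons]

end UnrestrictedWreathProduct

end WreathPaper

open WreathPaper Function in
theorem statement1_general {G H : Type*} [Group G] [Group H]
    (x : (H → G) ⋊[wreathphi G H] H) (h : H) (m : ℕ) (hx : ¬IsOfFinOrder x.right) :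
    (∀ a ∈ mulSupport x.left ∩ {y | ∃ i < m, y = x.right⁻¹ ^ i * h},
      ∀ b ∈ mulSupport x.left ∩ {y | ∃ i < m, y = x.right⁻¹ ^ i * h},
        PowLE x.right a b ∨ PowLE x.right b a) ∧
    ∃ l : List H, l.Nodup ∧
      (∀ y, y ∈ l ↔ y ∈ mulSupport x.left ∩ {y | ∃ i < m, y = x.right⁻¹ ^ i * h}) ∧
      l.Pairwise (PowLE x.right) ∧
      (x ^ m).left h = (l.map x.left).prod := by
  classical
  refine ⟨?_, (backwardOrbit x.right h m).filter fun y ↦ x.left y != 1,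
    (nodup_backwardOrbit hx h m).filter _, fun y ↦ ?_,
    (pairwise_powLE_backwardOrbit x.right h m).filter _, ?_⟩
  · rintro _ ⟨-, i, -, rfl⟩ _ ⟨-, j, -, rfl⟩
    exact powLE_total_inv_pow_mul x.right h i j
  · simp only [List.mem_filter, mem_backwardOrbit, bne_iff_ne, Set.mem_inter_iff,
      mem_mulSupport, Set.mem_ofPred_eq, and_comm]
  · rw [left_pow_apply, ← List.prod_filter_bne_one, List.filter_map, comp_def]

open WreathPaper Function in
/-- Let `g ∈ G ≀ H` with `σ(g)` of infinite order, `h ∈ H` and `m ∈ ℕ`, and let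
`F = supp(g) ∩ {σ(g)⁻ⁱ h : i ∈ [0, m−1]}`.  Then `F` is linearly ordered by
`≼_{σ(g)}` (where `a ≼_c b ↔ ∃ n : ℕ, a = cⁿ b`), and `τ(gᵐ)(h)` equals the
product of the `τ(g)(h')` for `h' ∈ F`, taken in increasing `≼_{σ(g)}`-order
(expressed via an enumeration of `F` as a `≼_{σ(g)}`-sorted duplicate-free
list). -/
theorem statement1 {G H : Type*} [Group G] [Group H]
    (g : ↥(RW G H)) (h : H) (m : ℕ)
    (hinf : ∀ n : ℕ, σw G H g ^ n = 1 → n = 0) :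
    (∀ a ∈ mulSupport (τw G H g) ∩ {x | ∃ i < m, x = (σw G H g)⁻¹ ^ i * h},
      ∀ b ∈ mulSupport (τw G H g) ∩ {x | ∃ i < m, x = (σw G H g)⁻¹ ^ i * h},
        (∃ n : ℕ, a = σw G H g ^ n * b) ∨ (∃ n : ℕ, b = σw G H g ^ n * a)) ∧
    (∃ l : List H, l.Nodup ∧
      (∀ x : H,
        x ∈ l ↔ x ∈ mulSupport (τw G H g) ∩ {x | ∃ i < m, x = (σw G H g)⁻¹ ^ i * h}) ∧
      l.Pairwise (fun a b => ∃ n : ℕ, a = σw G H g ^ n * b) ∧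
      τw G H (g ^ m) h = (l.map (τw G H g)).prod) := by
  refine statement1_general g.1 h m (mt isOfFinOrder_iff_pow_eq_one.1 ?_)
  exact fun ⟨n, hn, hpow⟩ ↦ hn.ne' (hinf n hpow)
end

section
/- Let G, H, K be groups and let n ∈ ℕ be such that K contains at least n pairwise distinct elements (i.e., there is an injection from Fin n into K). Then there exists an injective group homomorphism from Gⁿ ≀ H into G ≀ (H × K), where Gⁿ denotes the n-fold direct product of G. -/
namespace WreathPaper

open Function

lemma semidirectProduct_map_injective {N₁ N₂ A₁ A₂ : Type*} [Group N₁] [Group N₂] [Group A₁]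
    [Group A₂] {φ₁ : A₁ →* MulAut N₁} {φ₂ : A₂ →* MulAut N₂} {fn : N₁ →* N₂} {fg : A₁ →* A₂}
    (h : ∀ a, fn.comp (φ₁ a).toMonoidHom = (φ₂ (fg a)).toMonoidHom.comp fn)
    (hfn : Injective fn) (hfg : Injective fg) :
    Injective (SemidirectProduct.map fn fg h) := fun _ _ hxy ↦
  SemidirectProduct.ext (hfn (congrArg SemidirectProduct.left hxy))
    (hfg (congrArg SemidirectProduct.right hxy))

lemma finite_mulSupport_uncurry {X I M : Type*} [One M] [Finite I] {f : X → I → M}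
    (hf : (mulSupport f).Finite) : (mulSupport (uncurry f)).Finite := by
  refine (hf.prod Set.finite_univ).subset fun ⟨x, i⟩ hxi ↦ ⟨fun hx ↦ hxi ?_, Set.mem_univ i⟩
  exact congrFun hx i

section CosetExtend

variable {G H L I : Type*} [Group G] [Group H] [Group L]

/-- The map `H × I → L` listing the elements of the right cosets `α(H) sᵢ`. For
nonempty `I` it is injective exactly when `α` is injective and these cosets are distinct. -/
def cosetParam (α : H →* L) (s : I → L) (p : H × I) : L := α p.1 * s p.2

/-- The homomorphism `(H → Gᴵ) → (L → G)` storing the `i`-th coordinate of a function on the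
right coset `α(H) sᵢ`, with value `1` off these cosets. It is meaningful when `cosetParam α s`
is injective. -/
noncomputable def cosetExtend (α : H →* L) (s : I → L) : (H → I → G) →* (L → G) where
  toFun f := extend (cosetParam α s) (uncurry f) 1
  map_one' := extend_one _
  map_mul' f g := by
    rw [← extend_mul, one_mul]
    rfl

variable {α : H →* L} {s : I → L}

lemma cosetParam_mul (h : H) (p : H × I) :
    cosetParam α s (h * p.1, p.2) = α h * cosetParam α s p := by
  simp only [cosetParam, map_mul, mul_assoc]

lemma cosetExtend_cosetParam (hs : Injective (cosetParam α s)) (f : H → I → G) (p : H × I) :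
    cosetExtend α s f (cosetParam α s p) = f p.1 p.2 :=
  hs.extend_apply _ _ p

lemma cosetExtend_of_notMem_range (f : H → I → G) {x : L}
    (hx : x ∉ Set.range (cosetParam α s)) : cosetExtend α s f x = 1 :=
  extend_apply' _ _ x hx

lemma cosetExtend_injective (hs : Injective (cosetParam α s)) :
    Injective (cosetExtend (G := G) α s) :=
  (extend_injective hs (1 : L → G)).comp (Equiv.curry H I G).symm.injective

lemma finite_mulSupport_cosetExtend [Finite I] {f : H → I → G} (hf : (mulSupport f).Finite) :
    (mulSupport (cosetExtend α s f)).Finite :=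
  ((finite_mulSupport_uncurry hf).image _).subset mulSupport_extend_one_subset

lemma cosetExtend_wreathphi (hs : Injective (cosetParam α s)) (h : H) (f : H → I → G) :
    cosetExtend α s (wreathphi (I → G) H h f) = wreathphi G L (α h) (cosetExtend α s f) := by
  funext x
  change cosetExtend α s (fun a ↦ f (h⁻¹ * a)) x = cosetExtend α s f ((α h)⁻¹ * x)
  rw [← map_inv]
  by_cases hx : x ∈ Set.range (cosetParam α s)
  · obtain ⟨p, rfl⟩ := hx
    rw [← cosetParam_mul, cosetExtend_cosetParam hs, cosetExtend_cosetParam hs]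
  · have hx' : α h⁻¹ * x ∉ Set.range (cosetParam α s) := by
      rintro ⟨p, hp⟩
      refine hx ⟨(h * p.1, p.2), ?_⟩
      rw [cosetParam_mul, hp, map_inv, mul_inv_cancel_left]
    rw [cosetExtend_of_notMem_range _ hx, cosetExtend_of_notMem_range _ hx']

/-- The homomorphism `(H → Gᴵ) ⋊ H → (L → G) ⋊ L` of unrestricted wreath products acting as
`cosetExtend α s` on the base group and as `α` on the top group. -/
noncomputable def cosetSemidirectHom (hs : Injective (cosetParam α s)) :
    (H → I → G) ⋊[wreathphi (I → G) H] H →* (L → G) ⋊[wreathphi G L] L :=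
  SemidirectProduct.map (cosetExtend α s) α fun h ↦ MonoidHom.ext (cosetExtend_wreathphi hs h)

lemma cosetSemidirectHom_injective (hα : Injective α) (hs : Injective (cosetParam α s)) :
    Injective (cosetSemidirectHom (G := G) hs) :=
  semidirectProduct_map_injective _ (cosetExtend_injective hs) hα

/-- The restriction `Gᴵ ≀ H → G ≀ L` of `cosetSemidirectHom` to functions of finite support. -/
noncomputable def cosetHom [Finite I] (hs : Injective (cosetParam α s)) :
    RW (I → G) H →* RW G L :=
  ((cosetSemidirectHom hs).comp (RW (I → G) H).subtype).codRestrict (RW G L)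
    fun x ↦ finite_mulSupport_cosetExtend x.2

lemma cosetHom_injective [Finite I] (hα : Injective α) (hs : Injective (cosetParam α s)) :
    Injective (cosetHom (G := G) hs) :=
  (MonoidHom.injective_codRestrict _ _ _).2 <|
    (cosetSemidirectHom_injective hα hs).comp (RW (I → G) H).subtype_injective

end CosetExtend

end WreathPaper

open WreathPaper Function in
theorem statement4_general (G : Type*) {H L I : Type*} [Group G] [Group H] [Group L] [Finite I]
    (α : H →* L) (hα : Injective α) (s : I → L)
    (hs : Injective fun p : H × I ↦ α p.1 * s p.2) :
    ∃ φ : ↥(RW (I → G) H) →* ↥(RW G L), Injective φ :=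
  ⟨cosetHom hs, cosetHom_injective hα hs⟩

open WreathPaper Function in
/-- Let `G, H, K` be groups and `n ∈ ℕ` such that `K` has at least `n` pairwise
distinct elements.  Then there is an injective group homomorphism from
`Gⁿ ≀ H` into `G ≀ (H × K)`. -/
theorem statement4 (G H K : Type*) [Group G] [Group H] [Group K] (n : ℕ)
    (hK : ∃ ι : Fin n → K, Function.Injective ι) :
    ∃ φ : ↥(RW (Fin n → G) H) →* ↥(RW G (H × K)), Function.Injective φ := by
  obtain ⟨ι, hι⟩ := hK
  exact statement4_general G (MonoidHom.inl H K) (Prod.mk_left_injective 1) (fun i ↦ (1, ι i))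
    (by simpa [Prod.map_def] using injective_id.prodMap hι)
end

section
/- Let G be a group with generating set Σ ⊆ G, and consider the wreath product G ≀ ℤ. If (f, d) ∈ G ≀ ℤ can be written as a product s₁s₂⋯s_n of n elements, where each s_i is either of the form (f_a, 0) with a ∈ Σ or of the form (𝟙, 1) or (𝟙, −1), then there exists an interval [a, b] ⊆ ℤ with b − a ≤ n such that {0, d} ∪ supp(f) ⊆ [a, b]. -/
namespace WreathPaper

open Function Set
open scoped Pointwise

section Footprint

variable {G H : Type*} [Group G] [Group H]

/-- The footprint `{1, d} ∪ supp f` of an element `(f, d)` of `G ≀ H`: an interval supports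
`(f, d)` exactly when it contains this set. It is written with nested `insert`s so that membership
unfolds to a three-fold disjunction. -/
def footprint (x : RW G H) : Set H :=
  insert 1 (insert (σw G H x) (mulSupport (τw G H x)))

lemma one_mem_footprint (x : RW G H) : 1 ∈ footprint x :=
  mem_insert _ _

lemma σw_mem_footprint (x : RW G H) : σw G H x ∈ footprint x :=
  mem_insert_of_mem _ (mem_insert _ _)

lemma mulSupport_τw_subset_footprint (x : RW G H) : mulSupport (τw G H x) ⊆ footprint x :=
  (subset_insert _ _).trans (subset_insert _ _)

lemma σw_mul (x y : RW G H) : σw G H (x * y) = σw G H x * σw G H y := rfl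

lemma τw_mul (x y : RW G H) :
    τw G H (x * y) = τw G H x * fun a => τw G H y ((σw G H x)⁻¹ * a) := rfl

lemma mulSupport_τw_mul_subset (x y : RW G H) :
    mulSupport (τw G H (x * y)) ⊆
      mulSupport (τw G H x) ∪ σw G H x • mulSupport (τw G H y) := by
  rw [τw_mul]
  refine (mulSupport_mul _ _).trans (union_subset_union_right _ fun a ha => ?_)
  exact mem_smul_set_iff_inv_smul_mem.mpr ha

lemma footprint_mul_subset (x y : RW G H) :
    footprint (x * y) ⊆ footprint x * footprint y := by
  have lamps : mulSupport (τw G H (x * y)) ⊆ footprint x * footprint y :=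
    (mulSupport_τw_mul_subset x y).trans <| union_subset
      ((mulSupport_τw_subset_footprint x).trans (subset_mul_left _ (one_mem_footprint y)))
      ((smul_set_mono (mulSupport_τw_subset_footprint y)).trans
        (smul_set_subset_mul (σw_mem_footprint x)))
  refine insert_subset ?_ (insert_subset ?_ lamps)
  · simpa only [mul_one] using mul_mem_mul (one_mem_footprint x) (one_mem_footprint y)
  · rw [σw_mul]
    exact mul_mem_mul (σw_mem_footprint x) (σw_mem_footprint y)

lemma footprint_one : footprint (1 : RW G H) = {1} := by
  simp [footprint, σw, τw]

lemma footprint_embG [DecidableEq H] (g : G) : footprint (embG G H g) = {1} := by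
  have lamp : mulSupport (τw G H (embG G H g)) ⊆ {1} := Pi.mulSupport_mulSingle_subset
  refine Subset.antisymm ?_ (singleton_subset_iff.mpr (one_mem_footprint _))
  exact insert_subset rfl (insert_subset rfl lamp)

lemma footprint_embH (h : H) : footprint (embH G H h) = {1, h} := by
  simp [footprint, σw, τw, embH]

end Footprint

section Width

variable {G H : Type*} [Group G] [CommGroup H] {x y : RW G H} {r s : H}

section Preorder

variable [Preorder H]

/-- `x` is supported by an interval `[a, b]` of width at most `r`; the order group `H` is written
multiplicatively, so the width is `b / a`. -/
def HasWidthLE (x : RW G H) (r : H) : Prop :=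
  ∃ a b : H, b / a ≤ r ∧ footprint x ⊆ Icc a b

lemma HasWidthLE.mono (hx : HasWidthLE x r) (hrs : r ≤ s) : HasWidthLE x s := by
  obtain ⟨a, b, hab, hsub⟩ := hx
  exact ⟨a, b, hab.trans hrs, hsub⟩

lemma hasWidthLE_one : HasWidthLE (1 : RW G H) 1 :=
  ⟨1, 1, (div_one _).le, footprint_one.trans_subset (singleton_subset_iff.mpr ⟨le_rfl, le_rfl⟩)⟩

lemma hasWidthLE_embG [DecidableEq H] (g : G) : HasWidthLE (embG G H g) 1 :=
  ⟨1, 1, (div_one _).le,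
    (footprint_embG g).trans_subset (singleton_subset_iff.mpr ⟨le_rfl, le_rfl⟩)⟩

variable [IsOrderedMonoid H]

lemma HasWidthLE.mul (hx : HasWidthLE x r) (hy : HasWidthLE y s) :
    HasWidthLE (x * y) (r * s) := by
  obtain ⟨a, b, hab, hxsub⟩ := hx
  obtain ⟨c, d, hcd, hysub⟩ := hy
  refine ⟨a * c, b * d, ?_, ?_⟩
  · calc b * d / (a * c) = b / a * (d / c) := mul_div_mul_comm b d a c
      _ ≤ r * s := mul_le_mul' hab hcd
  · calc footprint (x * y) ⊆ footprint x * footprint y := footprint_mul_subset x y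
      _ ⊆ Icc a b * Icc c d := mul_subset_mul hxsub hysub
      _ ⊆ Icc (a * c) (b * d) := Icc_mul_Icc_subset' a b c d

lemma hasWidthLE_list_prod {l : List (RW G H)} (hl : ∀ x ∈ l, HasWidthLE x r) :
    HasWidthLE l.prod (r ^ l.length) := by
  induction l with
  | nil => simpa only [List.prod_nil, List.length_nil, pow_zero] using hasWidthLE_one
  | cons x l ih =>
    rw [List.forall_mem_cons] at hl
    rw [List.prod_cons, List.length_cons, pow_succ']
    exact hl.1.mul (ih hl.2)

end Preorder

lemma hasWidthLE_embH [LinearOrder H] [IsOrderedMonoid H] (h : H) :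
    HasWidthLE (embH G H h) |h|ₘ := by
  refine ⟨min h 1, max h 1, ?_, ?_⟩
  · rw [max_div_min_eq_mabs', div_one]
  · rw [footprint_embH]
    exact pair_subset ⟨min_le_right _ _, le_max_right _ _⟩ ⟨min_le_left _ _, le_max_left _ _⟩

end Width

end WreathPaper

open WreathPaper Set in
theorem statement7_general {G H : Type*} [Group G] [CommGroup H] [LinearOrder H]
    [IsOrderedMonoid H] {r : H} (hr : 1 ≤ r) (l : List (RW G H))
    (hl : ∀ s ∈ l, (∃ g, s = embG G H g) ∨ ∃ h, |h|ₘ ≤ r ∧ s = embH G H h) :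
    ∃ a b : H, b / a ≤ r ^ l.length ∧ footprint l.prod ⊆ Icc a b := by
  refine hasWidthLE_list_prod fun s hs => ?_
  obtain ⟨g, rfl⟩ | ⟨h, hh, rfl⟩ := hl s hs
  · exact (hasWidthLE_embG g).mono hr
  · exact (hasWidthLE_embH h).mono hh

open WreathPaper Function in
/-- Let `G` be a group with generating set `Σ ⊆ G` and consider `G ≀ ℤ`
(with `ℤ` written multiplicatively).  If `(f, d) ∈ G ≀ ℤ` is a product
`s₁ s₂ ⋯ s_n` where each `s_i` is of the form `(f_a, 0)` with `a ∈ Σ`, or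
`(𝟙, 1)`, or `(𝟙, −1)`, then there is an interval `[a, b] ⊆ ℤ` with
`b − a ≤ n` containing `0`, `d` and `supp f`. -/
theorem statement7 {G : Type*} [Group G] (S : Set G)
    (hS : Subgroup.closure S = ⊤)
    (w : ↥(RW G (Multiplicative ℤ))) (l : List ↥(RW G (Multiplicative ℤ)))
    (hw : w = l.prod) (n : ℕ) (hn : l.length = n)
    (hl : ∀ s ∈ l, (∃ a ∈ S, s = embG G (Multiplicative ℤ) a) ∨
        s = embH G (Multiplicative ℤ) (Multiplicative.ofAdd 1) ∨
        s = embH G (Multiplicative ℤ) (Multiplicative.ofAdd (-1))) :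
    ∃ a b : ℤ, b - a ≤ (n : ℤ) ∧
      ∀ z : ℤ, (z = 0 ∨ z = Multiplicative.toAdd (σw G (Multiplicative ℤ) w) ∨
          Multiplicative.ofAdd z ∈ mulSupport (τw G (Multiplicative ℤ) w)) →
        a ≤ z ∧ z ≤ b := by
  subst hw hn
  have step : (1 : Multiplicative ℤ) ≤ .ofAdd 1 := zero_le_one' ℤ
  have letters : ∀ s ∈ l, (∃ g, s = embG G _ g) ∨
      ∃ h : Multiplicative ℤ, |h|ₘ ≤ .ofAdd 1 ∧ s = embH G _ h := fun s hs => by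
    obtain ⟨g, -, rfl⟩ | rfl | rfl := hl s hs
    · exact .inl ⟨g, rfl⟩
    · exact .inr ⟨_, (mabs_of_one_le step).le, rfl⟩
    · exact .inr ⟨_, ((mabs_inv _).trans (mabs_of_one_le step)).le, rfl⟩
  obtain ⟨a, b, hab, hsub⟩ := statement7_general step l letters
  refine ⟨a.toAdd, b.toAdd, ?_, fun z hz => hsub hz⟩
  simpa [← Multiplicative.toAdd_le] using hab
end

section
/- Let G, H be groups. For every knapsack expression E of depth k over G ≀ H there exist r ∈ ℕ, torsion-free knapsack expressions E₁, …, E_r of depth k over G ≀ H, and affine maps φ₁, …, φ_r : ℕ^k → ℕ^k such that Sol(E) = ⋃_{i=1}^r φ_i(Sol(E_i)). -/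
namespace WreathPaper

variable {L : Type*} [Group L]

/-- Evaluation of the knapsack expression `h₀ g₁^{x₁} h₁ ⋯ g_k^{x_k} h_k`
(of depth `k`, with pairwise distinct variables `x₁, …, x_k`) at the
valuation `ν`. -/
def knapEval (k : ℕ) (h0 : L) (g h : Fin k → L) (ν : Fin k → ℕ) : L :=
  h0 * ((List.finRange k).map fun i => g i ^ ν i * h i).prod

/-- The solution set `Sol(E)` of the knapsack expression
`E = h₀ g₁^{x₁} h₁ ⋯ g_k^{x_k} h_k`. -/
def knapSol (k : ℕ) (h0 : L) (g h : Fin k → L) : Set (Fin k → ℕ) :=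
  {ν | knapEval k h0 g h ν = 1}

/-- A map `φ : ℕ^a → ℕ^b` is affine if `φ ν = A ν + μ` for a matrix
`A ∈ ℕ^{b×a}` and a vector `μ ∈ ℕ^b`. -/
def IsAffine {a b : ℕ} (φ : (Fin a → ℕ) → (Fin b → ℕ)) : Prop :=
  ∃ (A : Fin b → Fin a → ℕ) (μ : Fin b → ℕ), ∀ ν j, φ ν j = (∑ i, A j i * ν i) + μ j

end WreathPaper

/-!
Let `d i` be the order of `σ (g i)` if that order is finite and `1` otherwise. Writing each
exponent as `d i * ν i + c i` with `c i < d i` turns `g i ^ (d i * ν i + c i) * h i` into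
`(g i ^ d i) ^ ν i * (g i ^ c i * h i)`, so each of the finitely many residue vectors `c`
contributes one expression, in which `σ (g i ^ d i)` is trivial or of infinite order.
-/

namespace WreathPaper

theorem exists_pos_pow_eq_one_or_torsionFree {M : Type*} [Monoid M] (x : M) :
    ∃ d : ℕ, 0 < d ∧ (x ^ d = 1 ∨ ∀ n : ℕ, (x ^ d) ^ n = 1 → n = 0) := by
  by_cases hx : IsOfFinOrder x
  · exact ⟨orderOf x, hx.orderOf_pos, .inl (pow_orderOf_eq_one x)⟩
  · refine ⟨1, one_pos, .inr fun n hn => ?_⟩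
    rw [pow_one] at hn
    by_contra hn0
    exact hx (isOfFinOrder_iff_pow_eq_one.mpr ⟨n, Nat.pos_of_ne_zero hn0, hn⟩)

section ResidueClasses

variable {ι : Type*}

/-- The affine map `ν ↦ d ν + c` (computed coordinatewise), parametrizing for `c < d` the vectors
congruent to `c` modulo `d`. -/
def residueMap (d c ν : ι → ℕ) : ι → ℕ :=
  d * ν + c

theorem isAffine_residueMap {k : ℕ} (d c : Fin k → ℕ) : IsAffine (residueMap d c) :=
  ⟨Matrix.diagonal d, c, fun ν j => congrArg (· + c j) (Matrix.mulVec_diagonal d ν j).symm⟩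

theorem iUnion_range_residueMap {d : ι → ℕ} (hd : ∀ i, 0 < d i) :
    ⋃ c : ∀ i, Fin (d i), Set.range (residueMap d fun i => c i) = Set.univ := by
  refine Set.eq_univ_of_forall fun ν => Set.mem_iUnion.mpr ?_
  exact ⟨fun i => ⟨ν i % d i, Nat.mod_lt _ (hd i)⟩, fun i => ν i / d i,
    funext fun i => Nat.div_add_mod (ν i) (d i)⟩

theorem eq_iUnion_image_residueMap_preimage {d : ι → ℕ} (hd : ∀ i, 0 < d i)
    (S : Set (ι → ℕ)) :
    S = ⋃ c : ∀ i, Fin (d i),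
      (residueMap d fun i => c i) '' ((residueMap d fun i => c i) ⁻¹' S) := by
  simp only [Set.image_preimage_eq_inter_range, ← Set.inter_iUnion,
    iUnion_range_residueMap hd, Set.inter_univ]

end ResidueClasses

section Knapsack

variable {L : Type*} [Group L] {k : ℕ}

theorem knapEval_residueMap (h0 : L) (g h : Fin k → L) (d c ν : Fin k → ℕ) :
    knapEval k h0 g h (residueMap d c ν) =
      knapEval k h0 (fun i => g i ^ d i) (fun i => g i ^ c i * h i) ν := by
  simp only [knapEval, residueMap, Pi.add_apply, Pi.mul_apply, pow_add, pow_mul, mul_assoc]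

theorem residueMap_preimage_knapSol (h0 : L) (g h : Fin k → L) (d c : Fin k → ℕ) :
    residueMap d c ⁻¹' knapSol k h0 g h =
      knapSol k h0 (fun i => g i ^ d i) (fun i => g i ^ c i * h i) := by
  ext ν
  simp only [knapSol, Set.mem_preimage, Set.mem_ofPred_eq, knapEval_residueMap]

theorem knapSol_eq_iUnion_image_residueMap (h0 : L) (g h : Fin k → L) {d : Fin k → ℕ}
    (hd : ∀ i, 0 < d i) :
    knapSol k h0 g h = ⋃ c : ∀ i, Fin (d i), (residueMap d fun i => c i) ''
      knapSol k h0 (fun i => g i ^ d i) (fun i => g i ^ (c i : ℕ) * h i) := by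
  simpa only [residueMap_preimage_knapSol] using
    eq_iUnion_image_residueMap_preimage hd (knapSol k h0 g h)

end Knapsack

end WreathPaper

open WreathPaper in
theorem statement8_general {L M : Type*} [Group L] [Monoid M] (σ : L →* M) (k : ℕ)
    (h0 : L) (g h : Fin k → L) :
    ∃ (r : ℕ) (h0' : Fin r → L) (g' h' : Fin r → Fin k → L)
      (φ : Fin r → (Fin k → ℕ) → (Fin k → ℕ)),
      (∀ i j, σ (g' i j) = 1 ∨ ∀ n : ℕ, σ (g' i j) ^ n = 1 → n = 0) ∧
      (∀ i, IsAffine (φ i)) ∧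
      knapSol k h0 g h = ⋃ i, φ i '' knapSol k (h0' i) (g' i) (h' i) := by
  choose d d_pos hd using fun j => exists_pos_pow_eq_one_or_torsionFree (σ (g j))
  let residues := (Fintype.equivFin (∀ j, Fin (d j))).symm
  refine ⟨_, fun _ => h0, fun _ j => g j ^ d j, fun i j => g j ^ (residues i j : ℕ) * h j,
    fun i => residueMap d fun j => residues i j, fun _ j => ?_,
    fun _ => isAffine_residueMap _ _, ?_⟩
  · simpa only [map_pow] using hd j
  · rw [knapSol_eq_iUnion_image_residueMap h0 g h d_pos]
    exact (residues.surjective.iUnion_comp _).symm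

open WreathPaper Function in
/-- For every knapsack expression `E` of depth `k` over `G ≀ H` there are
`r ∈ ℕ`, torsion-free knapsack expressions `E₁, …, E_r` of depth `k` over
`G ≀ H` (i.e. each `σ(gᵢ)` is trivial or of infinite order), and affine maps
`φ₁, …, φ_r : ℕ^k → ℕ^k` with `Sol(E) = ⋃_{i=1}^r φ_i(Sol(E_i))`. -/
theorem statement8 {G H : Type*} [Group G] [Group H] (k : ℕ)
    (h0 : ↥(RW G H)) (g h : Fin k → ↥(RW G H)) :
    ∃ (r : ℕ) (h0' : Fin r → ↥(RW G H)) (g' h' : Fin r → Fin k → ↥(RW G H))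
      (φ : Fin r → (Fin k → ℕ) → (Fin k → ℕ)),
      (∀ i j, σw G H (g' i j) = 1 ∨ ∀ n : ℕ, σw G H (g' i j) ^ n = 1 → n = 0) ∧
      (∀ i, IsAffine (φ i)) ∧
      knapSol k h0 g h = ⋃ i, φ i '' knapSol k (h0' i) (g' i) (h' i) :=
  statement8_general (SemidirectProduct.rightHom.comp (RW G H).subtype) k h0 g h
end

section
/- In the setting of a fixed torsion-free knapsack expression E = g₁^{x₁}⋯g_k^{x_k}g_{k+1} over G ≀ H: assume that for every knapsack expression F over H the solution set Sol(F) is semilinear. Then for every profile P ⊆ 𝒫(A), the set L_P = {μ ∈ ℕ^M : every μ-cluster belongs to P} is a semilinear subset of ℕ^M. -/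
namespace WreathPaper

variable {G H : Type*} [Group G] [Group H] {k : ℕ}

/-- The type of addresses of the torsion-free knapsack expression
`E = g₁^{x₁} ⋯ g_k^{x_k} g_{k+1}` (with bases `g 0, …, g k`): pairs `(i, h)`
with `i ∈ [1, k+1]` and `h ∈ supp(gᵢ)`. -/
def Addr (g : Fin (k + 1) → ↥(RW G H)) : Type _ :=
  {p : Fin (k + 1) × H // p.2 ∈ Function.mulSupport (τw G H (g p.1))}

/-- The evaluation `ν(E) = g₁^{ν(x₁)} ⋯ g_k^{ν(x_k)} g_{k+1}`. -/
def evalE (g : Fin (k + 1) → ↥(RW G H)) (ν : Fin k → ℕ) : ↥(RW G H) :=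
  ((List.finRange k).map fun i => g i.castSucc ^ ν i).prod * g (Fin.last k)

/-- The prefix product `σ(g₁)^{ν(x₁)} ⋯ σ(g_j)^{ν(x_j)}`. -/
def headProd (g : Fin (k + 1) → ↥(RW G H)) (ν : Fin k → ℕ) (j : ℕ) : H :=
  (((List.finRange k).take j).map fun i => σw G H (g i.castSucc) ^ ν i).prod

/-- The evaluation at `ν` of the expression `τ(a)` over `G` associated with the
address `a = (i, h)`: it is `τ(g_{k+1})(h)` if `i = k+1`, the power
`(τ(gᵢ)(h))^{ν(xᵢ)}` if `i ≤ k` and `σ(gᵢ) = 1`, and `τ(gᵢ)(h)` if `i ≤ k`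
and `σ(gᵢ) ≠ 1` (i.e. `σ(gᵢ)` of infinite order).  It only depends on the
components of `ν` belonging to `S = {xᵢ : σ(gᵢ) = 1}`. -/
noncomputable def tauVal (g : Fin (k + 1) → ↥(RW G H)) (a : Addr g)
    (ν : Fin k → ℕ) : G :=
  letI := Classical.propDecidable (σw G H (g a.1.1) = 1)
  if hlt : (a.1.1 : ℕ) < k then
    if σw G H (g a.1.1) = 1 then τw G H (g a.1.1) a.1.2 ^ ν ⟨a.1.1, hlt⟩
    else τw G H (g a.1.1) a.1.2
  else τw G H (g a.1.1) a.1.2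

/-- The set `A_{μ,h}` of all addresses `a` such that `μ'(σ(a)) = h` for some
`μ' ⊏ μ`, where `σ(a) = σ(g₁)^{x₁} ⋯ σ(g_k)^{x_k} h'` for `a = (k+1, h')` and
`σ(a) = σ(g₁)^{x₁} ⋯ σ(g_{i−1})^{x_{i−1}} σ(gᵢ)^{yᵢ} h'` for `a = (i, h')`,
`i ≤ k` (the variable `yᵢ`, present only when `σ(gᵢ)` has infinite order,
ranges over `[0, μ(xᵢ) − 1]`; factors with base `1` evaluate to `1`).  Only the
components of `ν` belonging to `M = {xᵢ : σ(gᵢ) ≠ 1}` are relevant. -/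
def clusterAt (g : Fin (k + 1) → ↥(RW G H)) (ν : Fin k → ℕ) (h : H) :
    Set (Addr g) :=
  {a | if hlt : (a.1.1 : ℕ) < k then
        ∃ y : ℕ, (σw G H (g a.1.1) ≠ 1 → y < ν ⟨a.1.1, hlt⟩) ∧
          headProd g ν (a.1.1 : ℕ) * σw G H (g a.1.1) ^ y * a.1.2 = h
      else headProd g ν k * a.1.2 = h}

/-- `le` is an admissible linear order on the addresses: a linear order such
that `(i, h) ≤ (j, h')` whenever `i < j`, and such that for `i ≤ k` with
`σ(gᵢ)` nontrivial (hence of infinite order), `h ≼_{σ(gᵢ)} h'` implies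
`(i, h) ≤ (i, h')`. -/
def GoodOrder (g : Fin (k + 1) → ↥(RW G H)) (le : Addr g → Addr g → Prop) :
    Prop :=
  (∀ a b, le a b ∨ le b a) ∧
  (∀ a b c, le a b → le b c → le a c) ∧
  (∀ a b, le a b → le b a → a = b) ∧
  (∀ a b : Addr g, a.1.1 < b.1.1 → le a b) ∧
  (∀ a b : Addr g, a.1.1 = b.1.1 → (a.1.1 : ℕ) < k → σw G H (g a.1.1) ≠ 1 →
      (∃ n : ℕ, a.1.2 = σw G H (g a.1.1) ^ n * b.1.2) → le a b)

/-- `prodOver g le C κ v` says that the evaluation `κ(E_C)` of the expression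
`E_C = ∏_{a ∈ C} τ(a)` — the product over `C` taken in increasing `le`-order,
expressed via an `le`-sorted duplicate-free enumeration of `C` — equals `v`. -/
def prodOver (g : Fin (k + 1) → ↥(RW G H)) (le : Addr g → Addr g → Prop)
    (C : Set (Addr g)) (κ : Fin k → ℕ) (v : G) : Prop :=
  ∃ l : List (Addr g), l.Nodup ∧ (∀ x, x ∈ l ↔ x ∈ C) ∧ l.Pairwise le ∧
    (l.map fun a => tauVal g a κ).prod = v

end WreathPaper

namespace WreathPaper

/-- A subset of `ℕ^ι` is linear if it equals
`{v₀ + λ₁·v₁ + ⋯ + λ_n·v_n : λ₁, …, λ_n ∈ ℕ}` for some `v₀, …, v_n ∈ ℕ^ι`. -/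
def LinearSet {ι : Type*} (A : Set (ι → ℕ)) : Prop :=
  ∃ (n : ℕ) (v0 : ι → ℕ) (v : Fin n → ι → ℕ),
    A = {u | ∃ lam : Fin n → ℕ, u = v0 + ∑ j, lam j • v j}

/-- A subset of `ℕ^ι` is semilinear if it is a finite union of linear sets. -/
def SemilinearSet {ι : Type*} (A : Set (ι → ℕ)) : Prop :=
  ∃ (m : ℕ) (B : Fin m → Set (ι → ℕ)), (∀ i, LinearSet (B i)) ∧ A = ⋃ i, B i

end WreathPaper

/-!
Writing `σ(a)` as a function of `μ` and the extra variable `y`, the condition `σ(a) = σ(b)` is a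
knapsack equation over `H` in which variables repeat. Renaming repeated variables apart turns it
into an honest knapsack equation, whose solution set is semilinear by assumption; identifying them
again is a preimage under an additive map and hence keeps semilinearity. Every nonempty cluster
sits over the value of one of its own addresses, so "all clusters belong to `P`" is expressed from
finitely many such coincidence conditions and linear inequalities by Boolean operations and
quantification over natural numbers, under which semilinear sets are closed.

Variable assignments are points of an arbitrary finitely generated commutative monoid, the
variables being additive maps to `ℕ`: products of monoids then replace renamings of variables, and
projections replace quantifiers.
-/

namespace WreathPaper

section Semilinear

theorem linearSet_iff_isLinearSet {ι : Type*} {A : Set (ι → ℕ)} :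
    LinearSet A ↔ IsLinearSet A := by
  have mulVec_eq {n : ℕ} (B : Matrix ι (Fin n) ℕ) (lam : Fin n → ℕ) :
      B.mulVec lam = ∑ j, lam j • B.transpose j := by
    rw [← Matrix.vecMul_eq_sum, Matrix.vecMul_transpose]
  rw [Nat.isLinearSet_iff_exists_matrix]
  constructor
  · rintro ⟨n, v₀, v, rfl⟩
    exact ⟨v₀, n, (Matrix.of v).transpose, by simp only [mulVec_eq, eq_comm]; rfl⟩
  · rintro ⟨v₀, n, B, rfl⟩
    exact ⟨n, v₀, B.transpose, by simp only [mulVec_eq, eq_comm]⟩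

theorem semilinearSet_iff_isSemilinearSet {ι : Type*} {A : Set (ι → ℕ)} :
    SemilinearSet A ↔ IsSemilinearSet A := by
  constructor
  · rintro ⟨m, B, hB, rfl⟩
    exact .iUnion fun i => (linearSet_iff_isLinearSet.1 (hB i)).isSemilinearSet
  · rintro ⟨S, hfin, hS, rfl⟩
    obtain ⟨m, B, -, rfl⟩ := hfin.fin_param
    exact ⟨m, B, fun i => linearSet_iff_isLinearSet.2 (hS _ ⟨i, rfl⟩), Set.sUnion_range B⟩

variable {V W : Type*} [AddCommMonoid V]

theorem isSemilinearSet_setOfPred_exists [AddCommMonoid W] {s : Set (V × W)}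
    (hs : IsSemilinearSet s) : IsSemilinearSet {v | ∃ w, (v, w) ∈ s} := by
  convert hs.image (AddMonoidHom.fst V W)
  ext v
  simp

theorem isSemilinearSet_setOfPred_lt [AddMonoid.FG V] (φ ψ : V →+ ℕ) :
    IsSemilinearSet {v | φ v < ψ v} := by
  have h := isSemilinearSet_setOfPred_exists <| isSemilinearSet_setOfPred_eq (M := V × ℕ) 1 0
    (φ.comp (AddMonoidHom.fst V ℕ) + AddMonoidHom.snd V ℕ) (ψ.comp (AddMonoidHom.fst V ℕ))
  convert h using 1
  ext v
  suffices φ v < ψ v ↔ ∃ z, 1 + (φ v + z) = 0 + ψ v by simpa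
  exact ⟨fun hlt => ⟨ψ v - φ v - 1, by omega⟩, fun ⟨z, hz⟩ => by omega⟩

theorem isSemilinearSet_preimage_of_finite [AddMonoid.FG V] {A : Type*} [Finite A]
    {S : V → Set A} (hS : ∀ a, IsSemilinearSet {v | a ∈ S v}) (Q : Set (Set A)) :
    IsSemilinearSet (S ⁻¹' Q) := by
  have mem_iff (C : Set A) (a : A) : IsSemilinearSet {v | a ∈ S v ↔ a ∈ C} := by
    by_cases ha : a ∈ C
    · simpa only [ha, iff_true] using hS a
    · simpa only [ha, iff_false] using! (hS a).compl
  convert IsSemilinearSet.biUnion Q.toFinite fun C _ => IsSemilinearSet.iInter (mem_iff C)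
  ext v
  simp [← Set.ext_iff]

end Semilinear

section Knapsack

/-- A map `V → H` is a knapsack map if it is the evaluation of an expression built from constants
of `H` and powers with variable exponents, where a variable is an additive map `V →+ ℕ`. In
contrast to knapsack expressions, a variable may occur several times. -/
inductive IsKnapsackMap {V H : Type*} [AddCommMonoid V] [Group H] : (V → H) → Prop
  | const (c : H) : IsKnapsackMap fun _ => c
  | pow (a : H) (φ : V →+ ℕ) : IsKnapsackMap fun v => a ^ φ v
  | mul {f f' : V → H} : IsKnapsackMap f → IsKnapsackMap f' → IsKnapsackMap fun v => f v * f' v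

/-- Knapsack semilinearity of a group: every knapsack expression over it has a semilinear solution
set. -/
def KnapsackSemilinear (H : Type*) [Group H] : Prop :=
  ∀ (d : ℕ) (h₀ : H) (a b : Fin d → H), SemilinearSet {ν : Fin d → ℕ |
    h₀ * ((List.finRange d).map fun i => a i ^ ν i * b i).prod = 1}

namespace IsKnapsackMap

variable {V W H : Type*} [AddCommMonoid V] [AddCommMonoid W] [Group H]

theorem comp {f : V → H} (hf : IsKnapsackMap f) (ψ : W →+ V) :
    IsKnapsackMap fun w => f (ψ w) := by
  induction hf with
  | const c => exact const c
  | pow a φ => exact pow a (φ.comp ψ)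
  | mul _ _ ihf ihf' => exact ihf.mul ihf'

theorem inv {f : V → H} (hf : IsKnapsackMap f) : IsKnapsackMap fun v => (f v)⁻¹ := by
  induction hf with
  | const c => exact const c⁻¹
  | pow a φ => simpa only [inv_pow] using pow a⁻¹ φ
  | mul _ _ ihf ihf' => simpa only [mul_inv_rev] using ihf'.mul ihf

theorem list_prod {α : Type*} {f : α → V → H} (hf : ∀ a, IsKnapsackMap (f a)) (l : List α) :
    IsKnapsackMap fun v => (l.map fun a => f a v).prod := by
  induction l with
  | nil => exact const 1
  | cons a l ih => simpa only [List.map_cons, List.prod_cons] using (hf a).mul ih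

theorem exists_list {f : V → H} (hf : IsKnapsackMap f) :
    ∃ l : List (H × (V →+ ℕ) × H), ∀ v, f v = (l.map fun t => t.1 ^ t.2.1 v * t.2.2).prod := by
  induction hf with
  | const c => exact ⟨[(1, 0, c)], by simp⟩
  | pow a φ => exact ⟨[(a, φ, 1)], by simp⟩
  | mul _ _ ihf ihf' =>
    obtain ⟨l, hl⟩ := ihf
    obtain ⟨l', hl'⟩ := ihf'
    exact ⟨l ++ l', fun v => by simp [hl, hl']⟩

variable [AddMonoid.FG V]

theorem isSemilinearSet_eq_one (hH : KnapsackSemilinear H) {f : V → H} (hf : IsKnapsackMap f) :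
    IsSemilinearSet {v | f v = 1} := by
  obtain ⟨l, hl⟩ := hf.exists_list
  have renamed_apart := semilinearSet_iff_isSemilinearSet.1 <|
    hH l.length 1 (fun i => (l.get i).1) fun i => (l.get i).2.2
  convert renamed_apart.preimage (AddMonoidHom.pi fun i => (l.get i).2.1)
  ext v
  have hlist : f v = ((List.finRange l.length).map fun i =>
      (l.get i).1 ^ (l.get i).2.1 v * (l.get i).2.2).prod := by
    rw [hl]
    conv_lhs => rw [← List.map_get_finRange l, List.map_map]
    rfl
  simp [hlist]

theorem isSemilinearSet_eq (hH : KnapsackSemilinear H) {f f' : V → H}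
    (hf : IsKnapsackMap f) (hf' : IsKnapsackMap f') : IsSemilinearSet {v | f v = f' v} := by
  simpa only [mul_inv_eq_one] using (hf.mul hf'.inv).isSemilinearSet_eq_one hH

end IsKnapsackMap

end Knapsack

section Labels

variable {U V W A X : Type*}

/-- The labels `a` for which `f a (v, w) = x` for some parameter `w` that `D a` admits at `v`. The
clusters `A_{μ,h}` are the instance in which labels are addresses, see `clusterAt_eq_labelsAt`. -/
def labelsAt (D : A → Set (V × W)) (f : A → V × W → X) (v : V) (x : X) : Set A :=
  {a | ∃ w, (v, w) ∈ D a ∧ f a (v, w) = x}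

variable [AddCommMonoid U] [AddMonoid.FG U] [AddCommMonoid V] [AddCommMonoid W] [AddMonoid.FG W]
  {D : A → Set (V × W)} {f : A → V × W → X}

theorem isSemilinearSet_setOfPred_mem_labelsAt (π : U →+ V) {ξ : U → X} {a : A}
    (hD : IsSemilinearSet (D a))
    (hf : IsSemilinearSet {q : U × W | f a (π q.1, q.2) = ξ q.1}) :
    IsSemilinearSet {u | a ∈ labelsAt D f (π u) (ξ u)} :=
  isSemilinearSet_setOfPred_exists ((hD.preimage (π.prodMap (AddMonoidHom.id W))).inter hf)

theorem isSemilinearSet_forall_labelsAt_mem [AddMonoid.FG V] [Finite A]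
    (hD : ∀ a, IsSemilinearSet (D a))
    (hf : ∀ a b, IsSemilinearSet {q : (V × W) × W | f b (q.1.1, q.2) = f a q.1})
    (P : Set (Set A)) :
    IsSemilinearSet {v | ∀ x, (labelsAt D f v x).Nonempty → labelsAt D f v x ∈ P} := by
  have bad_point (a : A) : IsSemilinearSet
      {p : V × W | p ∈ D a ∧ labelsAt D f p.1 (f a p) ∈ Pᶜ} :=
    (hD a).inter <| isSemilinearSet_preimage_of_finite
      (fun b => isSemilinearSet_setOfPred_mem_labelsAt (AddMonoidHom.fst V W) (hD b) (hf a b)) Pᶜ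
  convert (IsSemilinearSet.iUnion fun a => isSemilinearSet_setOfPred_exists (bad_point a)).compl
  ext v
  simp only [Set.mem_ofPred_eq, Set.mem_compl_iff, Set.mem_iUnion]
  constructor
  · rintro hP ⟨a, w, hw, hbad⟩
    exact hbad (hP _ ⟨a, w, hw, rfl⟩)
  · rintro hgood x ⟨a, w, hw, rfl⟩
    exact by_contra fun hbad => hgood ⟨a, w, hw, hbad⟩

end Labels

section Clusters

variable {G H : Type*} [Group G] [Group H] {k : ℕ} (g : Fin (k + 1) → ↥(RW G H))

instance : Finite (Addr g) := by
  have hfin : (⋃ i, Prod.mk i '' Function.mulSupport (τw G H (g i))).Finite :=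
    Set.finite_iUnion fun i => (g i).2.image _
  refine (hfin.subset fun p hp => ?_).to_subtype
  exact Set.mem_iUnion.2 ⟨p.1, p.2, hp, rfl⟩

/-- The pairs `(ν, y)` for which `y` is an admissible value of the variable `yᵢ` of the address
`a = (i, h)`. An address without a variable `yᵢ` does not restrict `y`. -/
def sigmaDom (a : Addr g) : Set ((Fin k → ℕ) × ℕ) :=
  {p | ∀ hlt : (a.1.1 : ℕ) < k, σw G H (g a.1.1) ≠ 1 → p.2 < p.1 ⟨a.1.1, hlt⟩}

/-- The evaluation of the expression `σ(a)` at `(ν, y)`, where `y` is the value of the variable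
`yᵢ` of the address `a = (i, h)`. -/
def sigmaVal (a : Addr g) (p : (Fin k → ℕ) × ℕ) : H :=
  if (a.1.1 : ℕ) < k then headProd g p.1 a.1.1 * σw G H (g a.1.1) ^ p.2 * a.1.2
  else headProd g p.1 k * a.1.2

theorem clusterAt_eq_labelsAt (ν : Fin k → ℕ) (h : H) :
    clusterAt g ν h = labelsAt (sigmaDom g) (sigmaVal g) ν h := by
  ext a
  by_cases hlt : (a.1.1 : ℕ) < k <;> simp [clusterAt, labelsAt, sigmaDom, sigmaVal, hlt]

theorem isSemilinearSet_sigmaDom (a : Addr g) : IsSemilinearSet (sigmaDom g a) := by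
  by_cases hvar : ∃ _ : (a.1.1 : ℕ) < k, σw G H (g a.1.1) ≠ 1
  · obtain ⟨hlt, hne⟩ := hvar
    simpa [sigmaDom, hlt, hne] using isSemilinearSet_setOfPred_lt (AddMonoidHom.snd (Fin k → ℕ) ℕ)
      ((Pi.evalAddMonoidHom (fun _ => ℕ) ⟨a.1.1, hlt⟩).comp (AddMonoidHom.fst _ _))
  · convert IsSemilinearSet.univ (M := (Fin k → ℕ) × ℕ)
    exact Set.eq_univ_of_forall fun p hlt hne => absurd ⟨hlt, hne⟩ hvar

theorem isKnapsackMap_headProd (j : ℕ) : IsKnapsackMap fun ν => headProd g ν j :=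
  .list_prod (fun i => .pow _ (Pi.evalAddMonoidHom (fun _ => ℕ) i)) _

theorem isKnapsackMap_sigmaVal (a : Addr g) : IsKnapsackMap (sigmaVal g a) := by
  have head (j : ℕ) : IsKnapsackMap fun p : (Fin k → ℕ) × ℕ => headProd g p.1 j :=
    (isKnapsackMap_headProd g j).comp (AddMonoidHom.fst (Fin k → ℕ) ℕ)
  unfold sigmaVal
  split_ifs
  · exact ((head _).mul (.pow _ (AddMonoidHom.snd _ _))).mul (.const _)
  · exact (head _).mul (.const _)

theorem isSemilinearSet_forall_clusterAt_mem (hH : KnapsackSemilinear H)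
    (P : Set (Set (Addr g))) :
    IsSemilinearSet {ν : Fin k → ℕ |
      ∀ h : H, (clusterAt g ν h).Nonempty → clusterAt g ν h ∈ P} := by
  simp only [clusterAt_eq_labelsAt]
  refine isSemilinearSet_forall_labelsAt_mem (isSemilinearSet_sigmaDom g) (fun a b => ?_) P
  let forgetFirstExponent : ((Fin k → ℕ) × ℕ) × ℕ →+ (Fin k → ℕ) × ℕ :=
    (AddMonoidHom.fst _ _).prodMap (AddMonoidHom.id ℕ)
  exact ((isKnapsackMap_sigmaVal g b).comp forgetFirstExponent).isSemilinearSet_eq hH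
    ((isKnapsackMap_sigmaVal g a).comp (AddMonoidHom.fst ((Fin k → ℕ) × ℕ) ℕ))

end Clusters

theorem dite_eq_extendByZero {ι M : Type*} [AddZeroClass M] (p : ι → Prop) [DecidablePred p]
    (μ : {i // p i} → M) :
    (fun i => if hi : p i then μ ⟨i, hi⟩ else 0) =
      Function.ExtendByZero.hom M Subtype.val μ := by
  ext i
  split_ifs with hi
  · exact (Function.extend_val_apply hi).symm
  · exact (Function.extend_val_apply' (j := (0 : ι → M)) hi).symm

end WreathPaper

open WreathPaper Classical in
theorem statement11_general {G H : Type*} [Group G] [Group H] (k : ℕ)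
    (g : Fin (k + 1) → ↥(RW G H)) (hH : KnapsackSemilinear H) (P : Set (Set (Addr g))) :
    SemilinearSet {μ : {i : Fin k // σw G H (g i.castSucc) ≠ 1} → ℕ |
      ∀ h : H,
        (clusterAt g
          (fun i => if hi : σw G H (g i.castSucc) ≠ 1 then μ ⟨i, hi⟩ else 0)
          h).Nonempty →
        clusterAt g
          (fun i => if hi : σw G H (g i.castSucc) ≠ 1 then μ ⟨i, hi⟩ else 0)
          h ∈ P} := by
  simp only [dite_eq_extendByZero fun i : Fin k => σw G H (g i.castSucc) ≠ 1]
  exact semilinearSet_iff_isSemilinearSet.2 <|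
    (isSemilinearSet_forall_clusterAt_mem g hH P).preimage
      (Function.ExtendByZero.hom ℕ Subtype.val)

open WreathPaper Function Classical in
/-- For a fixed torsion-free knapsack expression `E = g₁^{x₁} ⋯ g_k^{x_k} g_{k+1}`
over `G ≀ H`: if every knapsack expression over `H` has a semilinear solution
set, then for every profile `P ⊆ 𝒫(A)` the set
`L_P = {μ ∈ ℕ^M : every μ-cluster belongs to P}` is semilinear (here
`M = {xᵢ : σ(gᵢ) ≠ 1}`, and a `μ`-cluster is a nonempty set `A_{μ,h}`, computed
from the extension of `μ ∈ ℕ^M` to all variables, the components outside `M`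
being irrelevant). -/
theorem statement11 {G H : Type*} [Group G] [Group H] (k : ℕ)
    (g : Fin (k + 1) → ↥(RW G H))
    (htf : ∀ i : Fin k, σw G H (g i.castSucc) = 1 ∨
        ∀ n : ℕ, σw G H (g i.castSucc) ^ n = 1 → n = 0)
    (hH : ∀ (d : ℕ) (h0 : H) (a b : Fin d → H),
        SemilinearSet {ν : Fin d → ℕ |
          h0 * ((List.finRange d).map fun i => a i ^ ν i * b i).prod = 1})
    (P : Set (Set (Addr g))) :
    SemilinearSet {μ : {i : Fin k // σw G H (g i.castSucc) ≠ 1} → ℕ |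
      ∀ h : H,
        (clusterAt g
          (fun i => if hi : σw G H (g i.castSucc) ≠ 1 then μ ⟨i, hi⟩ else 0)
          h).Nonempty →
        clusterAt g
          (fun i => if hi : σw G H (g i.castSucc) ≠ 1 then μ ⟨i, hi⟩ else 0)
          h ∈ P} := by
  exact statement11_general k g hH P
end

section
/- Let G be an abelian group (written additively). For i ∈ [1,n] let q_i ≥ 1 and u_i ∈ G^{q_i}, and let f = Σ_{i=1}^n f_{u_i} (pointwise sum of the associated periodic functions). If there exists a position m ∈ ℕ with f(m) ≠ 0, then there exists a position m < Σ_{i=1}^n q_i with f(m) ≠ 0. -/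
/-! Induct on the number of summands. If one of them has period `p`, the forward difference `Δ_[p]`
kills it and keeps the other summands periodic, at the cost of the last `p` positions of the initial
segment. By induction `Δ_[p]` kills the whole sum, which is therefore `p`-periodic and determined by
its first `p` values. -/

open scoped fwdDiff

section ForwardDifference

variable {M G : Type*} [AddCommMonoid M] [AddCommGroup G] {f : M → G} {c : M}

lemma fwdDiff_eq_zero_iff_periodic : Δ_[c] f = 0 ↔ Function.Periodic f c := by
  simp only [funext_iff, fwdDiff, Pi.zero_apply, sub_eq_zero, Function.Periodic]

lemma periodic_fwdDiff (hf : Function.Periodic f c) (h : M) : Function.Periodic (Δ_[h] f) c :=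
  (hf.add_const h).sub hf

end ForwardDifference

lemma eq_zero_of_periodic_of_forall_lt {α : Type*} [Zero α] {f : ℕ → α} {q : ℕ}
    (hf : Function.Periodic f q) (hq : 0 < q) (hzero : ∀ m < q, f m = 0) : f = 0 :=
  funext fun m => hf.map_mod_nat m ▸ hzero (m % q) (Nat.mod_lt m hq)

theorem sum_eq_zero_of_periodic_of_forall_lt {ι G : Type*} [AddCommGroup G] {s : Finset ι}
    {q : ι → ℕ} {g : ι → ℕ → G} (hq : ∀ i ∈ s, 0 < q i)
    (hg : ∀ i ∈ s, Function.Periodic (g i) (q i))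
    (hzero : ∀ m < ∑ i ∈ s, q i, (∑ i ∈ s, g i) m = 0) : ∑ i ∈ s, g i = 0 := by
  classical
  induction s using Finset.induction_on generalizing g with
  | empty => exact Finset.sum_empty
  | insert a s ha ih =>
    rw [Finset.forall_mem_insert] at hq hg
    rw [Finset.sum_insert (f := q) ha] at hzero
    set f := ∑ i ∈ insert a s, g i with hf
    have fwdDiff_f : Δ_[q a] f = ∑ i ∈ s, Δ_[q a] (g i) := by
      rw [hf, Finset.sum_insert ha, fwdDiff_add, fwdDiff_finsetSum,
        fwdDiff_eq_zero_iff_periodic.mpr hg.1, zero_add]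
    have fwdDiff_f_initial : ∀ m < ∑ i ∈ s, q i, Δ_[q a] f m = 0 := fun m hm => by
      rw [fwdDiff, hzero (m + q a) (by omega), hzero m (by omega), sub_zero]
    have f_periodic : Function.Periodic f (q a) := by
      rw [← fwdDiff_eq_zero_iff_periodic]
      rw [fwdDiff_f] at fwdDiff_f_initial ⊢
      exact ih hq.2 (fun i hi => periodic_fwdDiff (hg.2 i hi) (q a)) fwdDiff_f_initial
    exact eq_zero_of_periodic_of_forall_lt f_periodic hq.1 fun m hm => hzero m (by omega)

/-- Let `G` be an abelian group (written additively). For `i ∈ [1,n]` let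
`q i ≥ 1` and `u i ∈ G^{q i}`, and let `f = Σ_{i} f_{u i}` be the pointwise sum
of the associated periodic functions (where `f_u (n·q + r) = u r`). If there is
a position `m` with `f m ≠ 0`, then there is a position `m < Σ_i q i` with
`f m ≠ 0`. -/
theorem statement13 {G : Type*} [AddCommGroup G] (n : ℕ) (q : Fin n → ℕ)
    (hq : ∀ i, 1 ≤ q i) (u : (i : Fin n) → Fin (q i) → G)
    (f : ℕ → G) (hf : ∀ m : ℕ, f m = ∑ i, u i ⟨m % q i, Nat.mod_lt m (hq i)⟩)
    (hex : ∃ m : ℕ, f m ≠ 0) :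
    ∃ m : ℕ, m < ∑ i, q i ∧ f m ≠ 0 := by
  let g (i : Fin n) (m : ℕ) : G := u i ⟨m % q i, Nat.mod_lt m (hq i)⟩
  have g_periodic (i : Fin n) : Function.Periodic (g i) (q i) := fun m => by
    simp only [g, Nat.add_mod_right]
  obtain rfl : f = ∑ i, g i := funext fun m => by rw [hf, Finset.sum_apply]
  by_contra! hzero
  obtain ⟨m, hm⟩ := hex
  exact hm (congrFun (sum_eq_zero_of_periodic_of_forall_lt (fun i _ => hq i)
    (fun i _ => g_periodic i) hzero) m)
end
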